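/- Let Γ be a group and N a subgroup of Γ. Let κ₁ and κ₂ be finite-dimensional complex representations of Γ such that the space Hom_N(κ₁, κ₂) of N-equivariant linear maps is one-dimensional and every N-equivariant linear map κ₁ → κ₂ is Γ-equivariant. Let ρ and τ be finite-dimensional complex representations of Γ on whose spaces N acts trivially. Then every Γ-equivariant linear map κ₁ ⊗ ρ → κ₂ ⊗ τ is of the form S ⊗ T with S spanning Hom_N(κ₁, κ₂) and T a Γ-equivariant map ρ → τ, and the natural map gives a linear isomorphism Hom_Γ(κ₁ ⊗ ρ, κ₂ ⊗ τ) ≅ Hom_N(κ₁, κ₂) ⊗ Hom_Γ(ρ, τ); in particular dim Hom_Γ(κ₁ ⊗ ρ, κ₂ ⊗ τ) = dim Hom_Γ(ρ, τ). -/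

import Mathlib

/-!
Statement 9: the tensor-decomposition principle for equivariant homomorphism spaces.
-/

noncomputable section

open scoped TensorProduct

variable {Γ : Type*} [Group Γ]

/-- The space of linear maps between the spaces of two representations of `Γ` which are
equivariant for all elements of a subset `K` of `Γ`. -/
def equivHoms {V W : Type*} [AddCommGroup V] [Module ℂ V] [AddCommGroup W] [Module ℂ W]
    (K : Set Γ) (σ : Representation ℂ Γ V) (σ' : Representation ℂ Γ W) :
    Submodule ℂ (V →ₗ[ℂ] W) where
  carrier := {T | ∀ g ∈ K, ∀ v : V, T (σ g v) = σ' g (T v)}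
  zero_mem' := by intro g hg v; simp
  add_mem' := by intro S T hS hT g hg v; simp [hS g hg v, hT g hg v]
  smul_mem' := by intro c T hT g hg v; simp [hT g hg v]

/-!
For `w ∈ Vρ` and a functional `f` on `Vτ`, the slice `v ↦ (1 ⊗ f) (Φ (v ⊗ w))` of a `Γ`-equivariant
map `Φ : κ₁ ⊗ ρ → κ₂ ⊗ τ` is `N`-equivariant, because `N` acts trivially on `ρ` and `τ`. Expanding
the slices in a finite basis `S i` of `Hom_N(κ₁, κ₂)` gives `Φ = ∑ i, S i ⊗ T i`. The coefficients
`T i` are linear in `w` and take values in `Vτ`, rather than in its double dual, because the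
functionals `S ↦ l (S v)` span the dual of the finite-dimensional space `Hom_N(κ₁, κ₂)`. As the
`S i` are `Γ`-equivariant and linearly independent, uniqueness of the `T i` makes them
`Γ`-equivariant.
-/

section Contraction

variable {k V W : Type*} [CommRing k] [AddCommGroup V] [Module k V] [AddCommGroup W] [Module k W]

/-- Contraction `v ⊗ w ↦ f w • v` of the right tensor factor against a functional `f`. -/
def tensorContractRight (f : Module.Dual k W) : V ⊗[k] W →ₗ[k] V :=
  (TensorProduct.rid k V).toLinearMap ∘ₗ f.lTensor V

/-- Contraction `v ⊗ w ↦ l v • w` of the left tensor factor against a functional `l`. -/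
def tensorContractLeft (l : Module.Dual k V) : V ⊗[k] W →ₗ[k] W :=
  (TensorProduct.lid k W).toLinearMap ∘ₗ l.rTensor W

@[simp]
theorem tensorContractRight_tmul (f : Module.Dual k W) (v : V) (w : W) :
    tensorContractRight f (v ⊗ₜ[k] w) = f w • v := by
  simp [tensorContractRight]

@[simp]
theorem tensorContractLeft_tmul (l : Module.Dual k V) (v : V) (w : W) :
    tensorContractLeft l (v ⊗ₜ[k] w) = l v • w := by
  simp [tensorContractLeft]

theorem dual_apply_tensorContractLeft (f : Module.Dual k W) (l : Module.Dual k V) (x : V ⊗[k] W) :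
    f (tensorContractLeft l x) = l (tensorContractRight f x) := by
  induction x with
  | zero => simp only [map_zero]
  | tmul v w => simp [mul_comm]
  | add x y hx hy => simp only [map_add, hx, hy]

theorem tensorContractRight_map_one (f : Module.Dual k W) (A : V →ₗ[k] V) (x : V ⊗[k] W) :
    tensorContractRight f (TensorProduct.map A 1 x) = A (tensorContractRight f x) := by
  induction x with
  | zero => simp only [map_zero]
  | tmul v w => simp
  | add x y hx hy => simp only [map_add, hx, hy]

theorem eq_of_forall_tensorContractRight_eq [Module.Free k W] {x y : V ⊗[k] W}
    (h : ∀ f : Module.Dual k W, tensorContractRight f x = tensorContractRight f y) : x = y := by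
  classical
  let b := Module.Free.chooseBasis k W
  apply (TensorProduct.equivFinsuppOfBasisRight b).injective
  ext i
  simp only [TensorProduct.equivFinsuppOfBasisRight_apply]
  exact h (b.coord i)

end Contraction

section Slice

variable {k V₁ V₂ W₁ W₂ : Type*} [CommRing k] [AddCommGroup V₁] [Module k V₁]
  [AddCommGroup V₂] [Module k V₂] [AddCommGroup W₁] [Module k W₁] [AddCommGroup W₂] [Module k W₂]

/-- The slice `v ↦ (1 ⊗ f) (Φ (v ⊗ w))` of a linear map `Φ` between tensor products, obtained by
fixing the right argument and contracting the right factor of the value. -/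
def tensorSlice (Φ : V₁ ⊗[k] W₁ →ₗ[k] V₂ ⊗[k] W₂) (f : Module.Dual k W₂) (w : W₁) : V₁ →ₗ[k] V₂ :=
  tensorContractRight f ∘ₗ Φ ∘ₗ (TensorProduct.mk k V₁ W₁).flip w

@[simp]
theorem tensorSlice_apply (Φ : V₁ ⊗[k] W₁ →ₗ[k] V₂ ⊗[k] W₂) (f : Module.Dual k W₂) (w : W₁)
    (v : V₁) : tensorSlice Φ f w v = tensorContractRight f (Φ (v ⊗ₜ[k] w)) :=
  rfl

theorem eq_of_sum_map_eq_sum_map [Module.Projective k W₂] {ι : Type*} [Fintype ι]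
    {S : ι → V₁ →ₗ[k] V₂} (hS : LinearIndependent k S) {T T' : ι → W₁ →ₗ[k] W₂}
    (h : ∑ i, TensorProduct.map (S i) (T i) = ∑ i, TensorProduct.map (S i) (T' i)) : T = T' := by
  funext i
  ext w
  rw [← sub_eq_zero, ← Module.forall_dual_apply_eq_zero_iff k]
  intro f
  have coeff_eq : ∑ j, f (T j w) • S j = ∑ j, f (T' j w) • S j := by
    ext v
    simpa [LinearMap.sum_apply] using congr(tensorContractRight f ($h (v ⊗ₜ[k] w)))
  rw [map_sub, sub_eq_zero]
  exact Fintype.linearIndependent_iffₛ.mp hS _ _ coeff_eq i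

end Slice

section SliceSubspace

variable {k V₁ V₂ W₁ W₂ : Type*} [Field k] [AddCommGroup V₁] [Module k V₁]
  [AddCommGroup V₂] [Module k V₂] [AddCommGroup W₁] [Module k W₁] [AddCommGroup W₂] [Module k W₂]

theorem span_matrixCoeff_eq_top (H : Submodule k (V₁ →ₗ[k] V₂)) [FiniteDimensional k H] :
    Submodule.span k (Set.range fun p : Module.Dual k V₂ × V₁ ↦
      p.1 ∘ₗ LinearMap.applyₗ p.2 ∘ₗ H.subtype) = ⊤ := by
  apply Submodule.span_eq_top_of_ne_zero
  intro S hS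
  obtain ⟨v, hv⟩ : ∃ v, (S : V₁ →ₗ[k] V₂) v ≠ 0 := by
    contrapose! hS
    exact Subtype.ext (LinearMap.ext hS)
  obtain ⟨l, hl⟩ := Module.Projective.exists_dual_ne_zero k hv
  exact ⟨_, ⟨(l, v), rfl⟩, hl⟩

theorem exists_forall_dual_apply_eq_apply_tensorSlice {H : Submodule k (V₁ →ₗ[k] V₂)}
    [FiniteDimensional k H] {Φ : V₁ ⊗[k] W₁ →ₗ[k] V₂ ⊗[k] W₂}
    (hΦ : ∀ f w, tensorSlice Φ f w ∈ H) (φ : Module.Dual k H) :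
    ∃ T : W₁ →ₗ[k] W₂, ∀ f w, f (T w) = φ ⟨tensorSlice Φ f w, hΦ f w⟩ := by
  have hφ : φ ∈ Submodule.span k (Set.range fun p : Module.Dual k V₂ × V₁ ↦
      p.1 ∘ₗ LinearMap.applyₗ p.2 ∘ₗ H.subtype) :=
    span_matrixCoeff_eq_top H ▸ Submodule.mem_top
  induction hφ using Submodule.span_induction with
  | mem φ hφ =>
    obtain ⟨⟨l, v⟩, rfl⟩ := hφ
    exact ⟨tensorContractLeft l ∘ₗ Φ ∘ₗ TensorProduct.mk k V₁ W₁ v,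
      fun f w ↦ dual_apply_tensorContractLeft f l (Φ (v ⊗ₜ[k] w))⟩
  | zero => exact ⟨0, by simp⟩
  | add φ ψ _ _ hφ hψ =>
    obtain ⟨T, hT⟩ := hφ
    obtain ⟨U, hU⟩ := hψ
    exact ⟨T + U, by simp [hT, hU]⟩
  | smul c φ _ hφ =>
    obtain ⟨T, hT⟩ := hφ
    exact ⟨c • T, by simp [hT]⟩

theorem exists_eq_sum_map_of_tensorSlice_mem {ι : Type*} [Fintype ι]
    {H : Submodule k (V₁ →ₗ[k] V₂)} (b : Module.Basis ι k H) {Φ : V₁ ⊗[k] W₁ →ₗ[k] V₂ ⊗[k] W₂}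
    (hΦ : ∀ f w, tensorSlice Φ f w ∈ H) :
    ∃ T : ι → W₁ →ₗ[k] W₂, Φ = ∑ i, TensorProduct.map (b i : V₁ →ₗ[k] V₂) (T i) := by
  have : FiniteDimensional k H := b.finiteDimensional_of_finite
  choose T hT using fun i ↦ exists_forall_dual_apply_eq_apply_tensorSlice hΦ (b.coord i)
  refine ⟨T, TensorProduct.ext' fun v w ↦ eq_of_forall_tensorContractRight_eq fun f ↦ ?_⟩
  have slice_eq : tensorSlice Φ f w = ∑ i, f (T i w) • (b i : V₁ →ₗ[k] V₂) := by
    simp only [hT, Module.Basis.coord_apply]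
    simpa only [map_sum, map_smul, Submodule.subtype_apply] using
      congrArg H.subtype (b.sum_repr ⟨tensorSlice Φ f w, hΦ f w⟩).symm
  simpa [LinearMap.sum_apply] using congr($slice_eq v)

end SliceSubspace

section EquivHoms

variable {V₁ V₂ Vρ Vτ : Type*} [AddCommGroup V₁] [Module ℂ V₁] [AddCommGroup V₂] [Module ℂ V₂]
  [AddCommGroup Vρ] [Module ℂ Vρ] [AddCommGroup Vτ] [Module ℂ Vτ] {K : Set Γ}
  {κ₁ : Representation ℂ Γ V₁} {κ₂ : Representation ℂ Γ V₂}
  {ρ : Representation ℂ Γ Vρ} {τ : Representation ℂ Γ Vτ}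

theorem mem_equivHoms_iff_comp_eq {T : V₁ →ₗ[ℂ] V₂} :
    T ∈ equivHoms K κ₁ κ₂ ↔ ∀ g ∈ K, T ∘ₗ κ₁ g = κ₂ g ∘ₗ T := by
  simp only [LinearMap.ext_iff, LinearMap.comp_apply]
  rfl

theorem map_mem_equivHoms_tprod {S : V₁ →ₗ[ℂ] V₂} {T : Vρ →ₗ[ℂ] Vτ}
    (hS : S ∈ equivHoms K κ₁ κ₂) (hT : T ∈ equivHoms K ρ τ) :
    TensorProduct.map S T ∈ equivHoms K (κ₁.tprod ρ) (κ₂.tprod τ) := by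
  rw [mem_equivHoms_iff_comp_eq] at hS hT ⊢
  intro g hg
  simp only [Representation.tprod_apply, ← TensorProduct.map_comp, hS g hg, hT g hg]

theorem tensorSlice_mem_equivHoms (hρ : ∀ g ∈ K, ρ g = 1) (hτ : ∀ g ∈ K, τ g = 1)
    {Φ : V₁ ⊗[ℂ] Vρ →ₗ[ℂ] V₂ ⊗[ℂ] Vτ} (hΦ : Φ ∈ equivHoms K (κ₁.tprod ρ) (κ₂.tprod τ))
    (f : Module.Dual ℂ Vτ) (w : Vρ) : tensorSlice Φ f w ∈ equivHoms K κ₁ κ₂ := by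
  intro g hg v
  have hΦg : Φ (κ₁ g v ⊗ₜ[ℂ] w) = TensorProduct.map (κ₂ g) 1 (Φ (v ⊗ₜ[ℂ] w)) := by
    simpa [Representation.tprod_apply, hρ g hg, hτ g hg] using hΦ g hg (v ⊗ₜ[ℂ] w)
  rw [tensorSlice_apply, hΦg, tensorContractRight_map_one, tensorSlice_apply]

theorem mem_equivHoms_of_sum_map_mem {ι : Type*} [Fintype ι] {S : ι → V₁ →ₗ[ℂ] V₂}
    (hS : LinearIndependent ℂ S) (hSK : ∀ i, S i ∈ equivHoms K κ₁ κ₂) {T : ι → Vρ →ₗ[ℂ] Vτ}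
    (hΦ : ∑ i, TensorProduct.map (S i) (T i) ∈ equivHoms K (κ₁.tprod ρ) (κ₂.tprod τ)) (i : ι) :
    T i ∈ equivHoms K ρ τ := by
  rw [mem_equivHoms_iff_comp_eq]
  intro g hg
  have hSg : LinearIndependent ℂ fun i ↦ S i ∘ₗ κ₁ g :=
    hS.map_injOn (LinearMap.lcomp ℂ V₂ (κ₁ g))
      (LinearMap.lcomp_injective_of_surjective _ (κ₁.apply_bijective g).surjective).injOn
  have sum_eq : ∑ i, TensorProduct.map (S i ∘ₗ κ₁ g) (T i ∘ₗ ρ g) =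
      ∑ i, TensorProduct.map (S i ∘ₗ κ₁ g) (τ g ∘ₗ T i) := by
    ext v w
    simpa [LinearMap.sum_apply, Representation.tprod_apply, hSK _ g hg] using
      hΦ g hg (v ⊗ₜ[ℂ] w)
  exact congrFun (eq_of_sum_map_eq_sum_map hSg sum_eq) i

theorem equivHoms_antitone {K L : Set Γ} (h : K ⊆ L) : equivHoms L κ₁ κ₂ ≤ equivHoms K κ₁ κ₂ :=
  fun _ hT g hg ↦ hT g (h hg)

theorem exists_eq_sum_map_of_mem_equivHoms_tprod {ι : Type*} [Fintype ι]
    (b : Module.Basis ι ℂ (equivHoms K κ₁ κ₂))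
    (hK : equivHoms K κ₁ κ₂ ≤ equivHoms Set.univ κ₁ κ₂)
    (hρ : ∀ g ∈ K, ρ g = 1) (hτ : ∀ g ∈ K, τ g = 1) {Φ : V₁ ⊗[ℂ] Vρ →ₗ[ℂ] V₂ ⊗[ℂ] Vτ}
    (hΦ : Φ ∈ equivHoms Set.univ (κ₁.tprod ρ) (κ₂.tprod τ)) :
    ∃ T : ι → equivHoms Set.univ ρ τ,
      Φ = ∑ i, TensorProduct.map (b i : V₁ →ₗ[ℂ] V₂) (T i : Vρ →ₗ[ℂ] Vτ) := by
  obtain ⟨T, rfl⟩ := exists_eq_sum_map_of_tensorSlice_mem b <|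
    tensorSlice_mem_equivHoms hρ hτ (equivHoms_antitone (Set.subset_univ K) hΦ)
  have hb : LinearIndependent ℂ fun i ↦ (b i : V₁ →ₗ[ℂ] V₂) :=
    b.linearIndependent.map_injOn (Submodule.subtype _) Subtype.val_injective.injOn
  exact ⟨fun i ↦ ⟨T i, mem_equivHoms_of_sum_map_mem hb (fun i ↦ hK (b i).2) hΦ i⟩, rfl⟩

/-- The natural map `Hom_K(κ₁, κ₂) ⊗ Hom_Γ(ρ, τ) → Hom_Γ(κ₁ ⊗ ρ, κ₂ ⊗ τ)` sending the
formal tensor `S ⊗ₜ T` to the linear map `TensorProduct.map S T`. -/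
def equivHomsTensorMap (ρ : Representation ℂ Γ Vρ) (τ : Representation ℂ Γ Vτ)
    (hK : equivHoms K κ₁ κ₂ ≤ equivHoms Set.univ κ₁ κ₂) :
    equivHoms K κ₁ κ₂ ⊗[ℂ] equivHoms Set.univ ρ τ →ₗ[ℂ]
      equivHoms Set.univ (κ₁.tprod ρ) (κ₂.tprod τ) :=
  TensorProduct.lift <| LinearMap.mk₂ ℂ
    (fun S T ↦ ⟨TensorProduct.map S.1 T.1, map_mem_equivHoms_tprod (hK S.2) T.2⟩)
    (fun _ _ _ ↦ Subtype.ext (TensorProduct.map_add_left _ _ _))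
    (fun _ _ _ ↦ Subtype.ext (TensorProduct.map_smul_left _ _ _))
    (fun _ _ _ ↦ Subtype.ext (TensorProduct.map_add_right _ _ _))
    (fun _ _ _ ↦ Subtype.ext (TensorProduct.map_smul_right _ _ _))

@[simp]
theorem coe_equivHomsTensorMap_tmul (hK : equivHoms K κ₁ κ₂ ≤ equivHoms Set.univ κ₁ κ₂)
    (S : equivHoms K κ₁ κ₂) (T : equivHoms Set.univ ρ τ) :
    (equivHomsTensorMap ρ τ hK (S ⊗ₜ[ℂ] T) : V₁ ⊗[ℂ] Vρ →ₗ[ℂ] V₂ ⊗[ℂ] Vτ) =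
      TensorProduct.map S.1 T.1 :=
  rfl

theorem equivHomsTensorMap_injective [FiniteDimensional ℂ (equivHoms K κ₁ κ₂)]
    (hK : equivHoms K κ₁ κ₂ ≤ equivHoms Set.univ κ₁ κ₂) :
    Function.Injective (equivHomsTensorMap ρ τ hK) := by
  let b := Module.finBasis ℂ (equivHoms K κ₁ κ₂)
  have hb : LinearIndependent ℂ fun i ↦ (b i : V₁ →ₗ[ℂ] V₂) :=
    b.linearIndependent.map_injOn (Submodule.subtype _) Subtype.val_injective.injOn
  rw [injective_iff_map_eq_zero]
  intro x hx
  obtain ⟨T, rfl⟩ := TensorProduct.eq_repr_basis_left b x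
  rw [Finsupp.sum_fintype _ _ fun _ ↦ TensorProduct.tmul_zero _ _] at hx ⊢
  have sum_eq : ∑ i, TensorProduct.map (b i : V₁ →ₗ[ℂ] V₂) (T i : Vρ →ₗ[ℂ] Vτ) =
      ∑ i, TensorProduct.map (b i : V₁ →ₗ[ℂ] V₂) (0 : Vρ →ₗ[ℂ] Vτ) := by
    simpa using congr(($hx : V₁ ⊗[ℂ] Vρ →ₗ[ℂ] V₂ ⊗[ℂ] Vτ))
  have hT (i) : T i = 0 := Subtype.ext (congrFun (eq_of_sum_map_eq_sum_map hb sum_eq) i)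
  simp only [hT, TensorProduct.tmul_zero, Finset.sum_const_zero]

theorem equivHomsTensorMap_surjective [FiniteDimensional ℂ (equivHoms K κ₁ κ₂)]
    (hK : equivHoms K κ₁ κ₂ ≤ equivHoms Set.univ κ₁ κ₂)
    (hρ : ∀ g ∈ K, ρ g = 1) (hτ : ∀ g ∈ K, τ g = 1) :
    Function.Surjective (equivHomsTensorMap ρ τ hK) := by
  rintro ⟨Φ, hΦ⟩
  let b := Module.finBasis ℂ (equivHoms K κ₁ κ₂)
  obtain ⟨T, rfl⟩ := exists_eq_sum_map_of_mem_equivHoms_tprod b hK hρ hτ hΦ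
  exact ⟨∑ i, b i ⊗ₜ[ℂ] T i, Subtype.ext (by simp)⟩

/-- The natural map `equivHomsTensorMap` as an isomorphism
`Hom_K(κ₁, κ₂) ⊗ Hom_Γ(ρ, τ) ≃ Hom_Γ(κ₁ ⊗ ρ, κ₂ ⊗ τ)`, for `Hom_K(κ₁, κ₂)` of any finite dimension
and `K` acting trivially on `ρ` and `τ`. -/
def equivHomsTensorEquiv [FiniteDimensional ℂ (equivHoms K κ₁ κ₂)]
    (hK : equivHoms K κ₁ κ₂ ≤ equivHoms Set.univ κ₁ κ₂)
    (hρ : ∀ g ∈ K, ρ g = 1) (hτ : ∀ g ∈ K, τ g = 1) :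
    equivHoms K κ₁ κ₂ ⊗[ℂ] equivHoms Set.univ ρ τ ≃ₗ[ℂ]
      equivHoms Set.univ (κ₁.tprod ρ) (κ₂.tprod τ) :=
  LinearEquiv.ofBijective (equivHomsTensorMap ρ τ hK)
    ⟨equivHomsTensorMap_injective hK, equivHomsTensorMap_surjective hK hρ hτ⟩

theorem exists_eq_map_of_finrank_equivHoms_eq_one
    (hdim : Module.finrank ℂ (equivHoms K κ₁ κ₂) = 1)
    (hK : equivHoms K κ₁ κ₂ ≤ equivHoms Set.univ κ₁ κ₂)
    (hρ : ∀ g ∈ K, ρ g = 1) (hτ : ∀ g ∈ K, τ g = 1) {Φ : V₁ ⊗[ℂ] Vρ →ₗ[ℂ] V₂ ⊗[ℂ] Vτ}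
    (hΦ : Φ ∈ equivHoms Set.univ (κ₁.tprod ρ) (κ₂.tprod τ)) :
    ∃ (S : V₁ →ₗ[ℂ] V₂) (T : Vρ →ₗ[ℂ] Vτ), Submodule.span ℂ {S} = equivHoms K κ₁ κ₂ ∧
      T ∈ equivHoms Set.univ ρ τ ∧ Φ = TensorProduct.map S T := by
  let b := Module.basisUnique Unit hdim
  obtain ⟨T, hT⟩ := exists_eq_sum_map_of_mem_equivHoms_tprod b hK hρ hτ hΦ
  refine ⟨b (), T (), ?_, (T ()).2, by simpa using hT⟩
  simpa [Submodule.map_span, Set.range_unique] using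
    congrArg (Submodule.map (equivHoms K κ₁ κ₂).subtype) b.span_eq

end EquivHoms

theorem statement9_general
    {V₁ V₂ Vρ Vτ : Type*} [AddCommGroup V₁] [Module ℂ V₁] [AddCommGroup V₂] [Module ℂ V₂]
    [AddCommGroup Vρ] [Module ℂ Vρ] [AddCommGroup Vτ] [Module ℂ Vτ] (K : Set Γ)
    (κ₁ : Representation ℂ Γ V₁) (κ₂ : Representation ℂ Γ V₂)
    (ρ : Representation ℂ Γ Vρ) (τ : Representation ℂ Γ Vτ)
    (hdim : Module.finrank ℂ (equivHoms K κ₁ κ₂) = 1)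
    (hK : equivHoms K κ₁ κ₂ ≤ equivHoms Set.univ κ₁ κ₂)
    (hρ : ∀ g ∈ K, ρ g = 1) (hτ : ∀ g ∈ K, τ g = 1) :
    (∀ Φ ∈ equivHoms Set.univ (κ₁.tprod ρ) (κ₂.tprod τ),
        ∃ (S : V₁ →ₗ[ℂ] V₂) (T : Vρ →ₗ[ℂ] Vτ), Submodule.span ℂ {S} = equivHoms K κ₁ κ₂ ∧
          T ∈ equivHoms Set.univ ρ τ ∧ Φ = TensorProduct.map S T) ∧
    (∃ φ : equivHoms K κ₁ κ₂ ⊗[ℂ] equivHoms Set.univ ρ τ ≃ₗ[ℂ]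
        equivHoms Set.univ (κ₁.tprod ρ) (κ₂.tprod τ),
      ∀ (S : equivHoms K κ₁ κ₂) (T : equivHoms Set.univ ρ τ),
        (φ (S ⊗ₜ[ℂ] T) : V₁ ⊗[ℂ] Vρ →ₗ[ℂ] V₂ ⊗[ℂ] Vτ) = TensorProduct.map S.1 T.1) ∧
    Module.finrank ℂ (equivHoms Set.univ (κ₁.tprod ρ) (κ₂.tprod τ)) =
      Module.finrank ℂ (equivHoms Set.univ ρ τ) := by
  have : FiniteDimensional ℂ (equivHoms K κ₁ κ₂) := .of_finrank_pos (by lia)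
  let φ := equivHomsTensorEquiv hK hρ hτ
  refine ⟨fun Φ ↦ exists_eq_map_of_finrank_equivHoms_eq_one hdim hK hρ hτ,
    ⟨φ, coe_equivHomsTensorMap_tmul hK⟩, ?_⟩
  rw [← φ.finrank_eq, Module.finrank_tensorProduct, hdim, one_mul]

theorem statement9
    {V₁ V₂ Vρ Vτ : Type*}
    [AddCommGroup V₁] [Module ℂ V₁] [FiniteDimensional ℂ V₁]
    [AddCommGroup V₂] [Module ℂ V₂] [FiniteDimensional ℂ V₂]
    [AddCommGroup Vρ] [Module ℂ Vρ] [FiniteDimensional ℂ Vρ]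
    [AddCommGroup Vτ] [Module ℂ Vτ] [FiniteDimensional ℂ Vτ]
    (N : Subgroup Γ)
    (κ₁ : Representation ℂ Γ V₁) (κ₂ : Representation ℂ Γ V₂)
    (ρ : Representation ℂ Γ Vρ) (τ : Representation ℂ Γ Vτ)
    -- `Hom_N(κ₁, κ₂)` is one-dimensional
    (hdim : Module.finrank ℂ (equivHoms (N : Set Γ) κ₁ κ₂) = 1)
    -- every `N`-equivariant linear map `κ₁ → κ₂` is `Γ`-equivariant
    (hNΓ : ∀ T : V₁ →ₗ[ℂ] V₂, T ∈ equivHoms (N : Set Γ) κ₁ κ₂ →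
        T ∈ equivHoms (Set.univ : Set Γ) κ₁ κ₂)
    -- `N` acts trivially on the spaces of `ρ` and `τ`
    (hρtriv : ∀ g ∈ N, ρ g = 1) (hτtriv : ∀ g ∈ N, τ g = 1) :
    -- every `Γ`-equivariant map `κ₁ ⊗ ρ → κ₂ ⊗ τ` has the form `S ⊗ T`
    (∀ Φ : (V₁ ⊗[ℂ] Vρ) →ₗ[ℂ] (V₂ ⊗[ℂ] Vτ),
        Φ ∈ equivHoms (Set.univ : Set Γ) (κ₁.tprod ρ) (κ₂.tprod τ) →
        ∃ (S : V₁ →ₗ[ℂ] V₂) (T : Vρ →ₗ[ℂ] Vτ),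
          Submodule.span ℂ {S} = equivHoms (N : Set Γ) κ₁ κ₂ ∧
          T ∈ equivHoms (Set.univ : Set Γ) ρ τ ∧ Φ = TensorProduct.map S T) ∧
    -- the natural map is a linear isomorphism
    (∃ φ : ((equivHoms (N : Set Γ) κ₁ κ₂) ⊗[ℂ] (equivHoms (Set.univ : Set Γ) ρ τ)) ≃ₗ[ℂ]
        (equivHoms (Set.univ : Set Γ) (κ₁.tprod ρ) (κ₂.tprod τ)),
      ∀ (S : equivHoms (N : Set Γ) κ₁ κ₂) (T : equivHoms (Set.univ : Set Γ) ρ τ),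
        (φ (S ⊗ₜ[ℂ] T) : (V₁ ⊗[ℂ] Vρ) →ₗ[ℂ] (V₂ ⊗[ℂ] Vτ)) =
          TensorProduct.map (S : V₁ →ₗ[ℂ] V₂) (T : Vρ →ₗ[ℂ] Vτ)) ∧
    -- in particular the dimensions agree
    Module.finrank ℂ (equivHoms (Set.univ : Set Γ) (κ₁.tprod ρ) (κ₂.tprod τ)) =
      Module.finrank ℂ (equivHoms (Set.univ : Set Γ) ρ τ) := by
  exact statement9_general (N : Set Γ) κ₁ κ₂ ρ τ hdim hNΓ hρtriv hτtriv
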